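/- arXiv:2403.18399 — 2 statements merged into one kernel-verified Lean document; each statement's English description precedes it below -/
import Mathlib

section
/- Let r ≥ 1. There is a Lie algebra isomorphism Φ : ft'(r) → ft(r) determined on generators by Φ(t_{ij}) = t_{ij} for all 1 ≤ i,j ≤ r, Φ(t_{0j}) = Φ(t_{j0}) = −∑_{i=1}^r t_{ij} for all 1 ≤ j ≤ r, and Φ(t_{00}) = ∑_{i,j=1}^r t_{ij}. In particular, the two presentations (the presentation of ft(r) with indices 1,…,r and the manifestly cyclic presentation ft'(r) with indices 0,…,r) define isomorphic Lie algebras. -/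
open FreeLieAlgebra

/-- The defining relations of the framed Drinfeld–Kohno Lie algebra `ft(r)`.  Generators are
indexed by `Fin r × Fin r`, the index `i : Fin r` representing `i+1 ∈ {1,…,r}`. -/
def ftRel (r : ℕ) : Set (FreeLieAlgebra ℚ (Fin r × Fin r)) :=
  { x | (∃ i j : Fin r, x = of ℚ (i, j) - of ℚ (j, i)) ∨
        (∃ i j k l : Fin r, ({i, j} ∩ {k, l} : Set (Fin r)) = ∅ ∧
          x = ⁅of ℚ (i, j), of ℚ (k, l)⁆) ∨
        (∃ i j k : Fin r, x = ⁅of ℚ (i, j), of ℚ (k, i) + of ℚ (k, j)⁆) }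

/-- The framed Drinfeld–Kohno Lie algebra `ft(r)`: the quotient of the free Lie algebra over `ℚ`
on the generators `t_{ij}`, `1 ≤ i,j ≤ r`, by the Lie ideal generated by the relations. -/
abbrev ft (r : ℕ) :=
  FreeLieAlgebra ℚ (Fin r × Fin r) ⧸
    LieSubmodule.lieSpan ℚ (FreeLieAlgebra ℚ (Fin r × Fin r)) (ftRel r)

/-- The image `t_{ij}` in `ft(r)` of the generator indexed by `(i,j)`. -/
noncomputable def tf {r : ℕ} (i j : Fin r) : ft r :=
  LieSubmodule.Quotient.mk
    (N := LieSubmodule.lieSpan ℚ (FreeLieAlgebra ℚ (Fin r × Fin r)) (ftRel r))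
    (of ℚ (i, j))

/-- The defining relations of the cyclically presented framed Drinfeld–Kohno Lie algebra
`ft'(r)`.  Generators are indexed by `Fin (r+1) × Fin (r+1)`, the index `i : Fin (r+1)`
representing `i ∈ {0,…,r}`. -/
def ftcRel (r : ℕ) : Set (FreeLieAlgebra ℚ (Fin (r + 1) × Fin (r + 1))) :=
  { x | (∃ i j : Fin (r + 1), x = of ℚ (i, j) - of ℚ (j, i)) ∨
        (∃ i j k l : Fin (r + 1), ({i, j} ∩ {k, l} : Set (Fin (r + 1))) = ∅ ∧
          x = ⁅of ℚ (i, j), of ℚ (k, l)⁆) ∨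
        (∃ j : Fin (r + 1), x = ∑ i : Fin (r + 1), of ℚ (i, j)) }

/-- The cyclically presented framed Drinfeld–Kohno Lie algebra `ft'(r)`: the quotient of the
free Lie algebra over `ℚ` on the generators `t_{ij}`, `0 ≤ i,j ≤ r`, by the Lie ideal generated
by the relations. -/
abbrev ftc (r : ℕ) :=
  FreeLieAlgebra ℚ (Fin (r + 1) × Fin (r + 1)) ⧸
    LieSubmodule.lieSpan ℚ (FreeLieAlgebra ℚ (Fin (r + 1) × Fin (r + 1))) (ftcRel r)

/-- The image `t_{ij}` in `ft'(r)` of the generator indexed by `(i,j)`. -/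
noncomputable def tc {r : ℕ} (i j : Fin (r + 1)) : ftc r :=
  LieSubmodule.Quotient.mk
    (N := LieSubmodule.lieSpan ℚ (FreeLieAlgebra ℚ (Fin (r + 1) × Fin (r + 1))) (ftcRel r))
    (of ℚ (i, j))

/-!
Both presentations are read as universal properties: a Lie algebra map out of `ft r` or `ftc r` is
a family `t i j` satisfying the corresponding relations. In a cyclic family the vanishing of the
column sums forces `t 0 (j + 1)` and `t 0 0` to be the sums prescribed for `Φ`, so a cyclic family
is determined by its restriction to the nonzero indices, and what remains is to match the relations.

The bridge is the locality relation `⁅t i j, t k l⁆ = 0` for disjoint index pairs: for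
distinct `i, j, k` it collapses `⁅t i j, ∑ l, t l k⁆` to `⁅t i j, t i k + t j k⁆`. The vanishing of
the former says that `t i j` commutes with the generator `t 0 k` of the cyclic presentation,
that of the latter is the four-term relation of `ft r`. On the diagonal the four-term relation
reads `2 ⁅t i i, t k i⁆ = 0`, so one divides by `2`.
-/

section LieQuotient

variable {R L L₂ : Type*} [CommRing R] [LieRing L] [LieAlgebra R L] [LieRing L₂] [LieAlgebra R L₂]

/-- The quotient map by a Lie ideal, as a morphism of Lie algebras
(`LieSubmodule.Quotient.mk'` is only a morphism of Lie modules). -/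
def lieQuotientMk (I : LieIdeal R L) : L →ₗ⁅R⁆ L ⧸ I where
  toLinearMap := I.toSubmodule.mkQ
  map_lie' := rfl

theorem lieQuotientMk_surjective (I : LieIdeal R L) : Function.Surjective (lieQuotientMk I) :=
  Quot.mk_surjective

theorem lieQuotientMk_lieSpan_eq_zero {S : Set L} {x : L} (hx : x ∈ S) :
    lieQuotientMk (LieSubmodule.lieSpan R L S) x = 0 :=
  LieSubmodule.Quotient.mk_eq_zero'.2 (LieSubmodule.subset_lieSpan hx)

theorem lieQuotient_hom_ext {I : LieIdeal R L} {f g : L ⧸ I →ₗ⁅R⁆ L₂}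
    (h : f.comp (lieQuotientMk I) = g.comp (lieQuotientMk I)) : f = g :=
  LieHom.ext ((lieQuotientMk_surjective I).forall.2 (LieHom.congr_fun h))

/-- The morphism induced on the quotient by the Lie ideal generated by `S`, by a morphism of Lie
algebras that vanishes on `S`. -/
def lieSpanQuotientLift {S : Set L} (f : L →ₗ⁅R⁆ L₂) (hf : ∀ x ∈ S, f x = 0) :
    L ⧸ LieSubmodule.lieSpan R L S →ₗ⁅R⁆ L₂ where
  toLinearMap := Submodule.liftQ _ (f : L →ₗ[R] L₂) <|
    show LieSubmodule.lieSpan R L S ≤ f.ker from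
      LieSubmodule.lieSpan_le.2 fun x hx ↦ f.mem_ker.2 (hf x hx)
  map_lie' {x y} := by
    obtain ⟨x, rfl⟩ := lieQuotientMk_surjective _ x
    obtain ⟨y, rfl⟩ := lieQuotientMk_surjective _ y
    exact f.map_lie x y

theorem lieSpanQuotientLift_mk {S : Set L} (f : L →ₗ⁅R⁆ L₂) (hf : ∀ x ∈ S, f x = 0) (x : L) :
    lieSpanQuotientLift f hf (lieQuotientMk _ x) = f x :=
  rfl

end LieQuotient

section Families

variable {ι κ L : Type*} [LieRing L]

/-- The relations common to both presentations: `t` is symmetric, and `t i j` commutes with `t k l`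
when `{i, j}` and `{k, l}` are disjoint. Disjointness is spelled out as four inequalities. -/
structure IsLocalFamily (t : ι → ι → L) : Prop where
  symm : ∀ i j, t i j = t j i
  lie_eq_zero : ∀ {i j k l}, i ≠ k → i ≠ l → j ≠ k → j ≠ l → ⁅t i j, t k l⁆ = 0

/-- Families satisfying the relations of `ft`, for an arbitrary index type. -/
structure IsFramedDrinfeldKohno (t : ι → ι → L) : Prop extends IsLocalFamily t where
  lie_add_eq_zero : ∀ i j k, ⁅t i j, t k i + t k j⁆ = 0

/-- Families satisfying the relations of `ftc`, for an arbitrary finite index type. -/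
structure IsCyclicDrinfeldKohno [Fintype ι] (t : ι → ι → L) : Prop extends IsLocalFamily t where
  sum_eq_zero : ∀ j, ∑ i, t i j = 0

theorem IsFramedDrinfeldKohno.comp_injective {t : κ → κ → L} (ht : IsFramedDrinfeldKohno t)
    {e : ι → κ} (he : Function.Injective e) : IsFramedDrinfeldKohno fun i j ↦ t (e i) (e j) where
  symm _ _ := ht.symm _ _
  lie_eq_zero hik hil hjk hjl := ht.lie_eq_zero (he.ne hik) (he.ne hil) (he.ne hjk) (he.ne hjl)
  lie_add_eq_zero _ _ _ := ht.lie_add_eq_zero _ _ _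

variable [Fintype ι] {t : ι → ι → L}

namespace IsLocalFamily

theorem lie_diag_sum_eq_lie (ht : IsLocalFamily t) {i k : ι} (hik : i ≠ k) :
    ⁅t i i, ∑ l, t l k⁆ = ⁅t i i, t i k⁆ := by
  rw [lie_sum]
  exact Fintype.sum_eq_single i fun l hl ↦ ht.lie_eq_zero hl.symm hik hl.symm hik

theorem lie_sum_eq_lie_add (ht : IsLocalFamily t) {i j k : ι} (hij : i ≠ j) (hik : i ≠ k)
    (hjk : j ≠ k) : ⁅t i j, ∑ l, t l k⁆ = ⁅t i j, t i k + t j k⁆ := by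
  rw [lie_sum, lie_add]
  exact Fintype.sum_eq_add i j hij fun l hl ↦ ht.lie_eq_zero hl.1.symm hik hl.2.symm hjk

end IsLocalFamily

namespace IsCyclicDrinfeldKohno

theorem lie_diag_eq_zero (ht : IsCyclicDrinfeldKohno t) (i j : ι) : ⁅t i i, t i j⁆ = 0 := by
  rcases eq_or_ne i j with rfl | hij
  · exact lie_self _
  · rw [← ht.lie_diag_sum_eq_lie hij, ht.sum_eq_zero, lie_zero]

theorem isFramedDrinfeldKohno (ht : IsCyclicDrinfeldKohno t) : IsFramedDrinfeldKohno t where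
  toIsLocalFamily := ht.toIsLocalFamily
  lie_add_eq_zero i j k := by
    have lie_add_diag (i j : ι) : ⁅t i j, t i i + t i j⁆ = 0 := by
      rw [lie_add, lie_self, add_zero, ← lie_skew, ht.lie_diag_eq_zero, neg_zero]
    rcases eq_or_ne i j with rfl | hij
    · rw [lie_add, ht.symm k i, ht.lie_diag_eq_zero, add_zero]
    rcases eq_or_ne i k with rfl | hik
    · exact lie_add_diag i j
    rcases eq_or_ne j k with rfl | hjk
    · rw [ht.symm i j, add_comm]
      exact lie_add_diag j i
    · rw [ht.symm k i, ht.symm k j, ← ht.lie_sum_eq_lie_add hij hik hjk, ht.sum_eq_zero, lie_zero]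

end IsCyclicDrinfeldKohno

namespace IsFramedDrinfeldKohno

theorem lie_sum_add_sum_eq_zero (ht : IsFramedDrinfeldKohno t) (i j : ι) :
    ⁅t i j, ∑ k, t k i + ∑ k, t k j⁆ = 0 := by
  rw [← Finset.sum_add_distrib, lie_sum]
  exact Finset.sum_eq_zero fun k _ ↦ ht.lie_add_eq_zero i j k

variable [IsAddTorsionFree L]

theorem lie_sum_eq_zero (ht : IsFramedDrinfeldKohno t) {i j k : ι} (hik : i ≠ k) (hjk : j ≠ k) :
    ⁅t i j, ∑ l, t l k⁆ = 0 := by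
  rcases eq_or_ne i j with rfl | hij
  · rw [ht.lie_diag_sum_eq_lie hik, ← two_nsmul_eq_zero, two_nsmul, ← lie_add, ht.symm i k]
    exact ht.lie_add_eq_zero i i k
  · rw [ht.lie_sum_eq_lie_add hij hik hjk, ht.symm i k, ht.symm j k]
    exact ht.lie_add_eq_zero i j k

theorem lie_sum_sum_eq_zero (ht : IsFramedDrinfeldKohno t) (i j : ι) :
    ⁅t i j, ∑ k, ∑ l, t l k⁆ = 0 := by
  rw [lie_sum]
  rcases eq_or_ne i j with rfl | hij
  · rw [Fintype.sum_eq_single i fun k hk ↦ ht.lie_sum_eq_zero hk.symm hk.symm,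
      ← two_nsmul_eq_zero, two_nsmul, ← lie_add]
    exact ht.lie_sum_add_sum_eq_zero i i
  · rw [Fintype.sum_eq_add i j hij fun k hk ↦ ht.lie_sum_eq_zero hk.1.symm hk.2.symm, ← lie_add]
    exact ht.lie_sum_add_sum_eq_zero i j

end IsFramedDrinfeldKohno

end Families

section CyclicExtension

variable {n : ℕ} {A B L : Type*} [AddCommGroup A] [AddCommGroup B] [LieRing L]

/-- The extension of a family indexed by `1, …, n` to the indices `0, …, n` that makes all column
sums vanish. It gives the images under `Φ` of the generators of `ftc`. -/
def cyclicExtension (t : Fin n → Fin n → A) : Fin (n + 1) → Fin (n + 1) → A :=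
  Fin.cons (Fin.cons (∑ i, ∑ j, t i j) fun j ↦ -∑ i, t i j)
    fun j ↦ Fin.cons (-∑ i, t i j) fun k ↦ t j k

section Apply

variable (t : Fin n → Fin n → A)

theorem cyclicExtension_zero_zero : cyclicExtension t 0 0 = ∑ i, ∑ j, t i j := rfl

theorem cyclicExtension_zero_succ (j : Fin n) : cyclicExtension t 0 j.succ = -∑ i, t i j := rfl

theorem cyclicExtension_succ_zero (j : Fin n) : cyclicExtension t j.succ 0 = -∑ i, t i j := rfl

theorem cyclicExtension_succ_succ (i j : Fin n) : cyclicExtension t i.succ j.succ = t i j := rfl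

theorem map_cyclicExtension (f : A →+ B) (i j : Fin (n + 1)) :
    f (cyclicExtension t i j) = cyclicExtension (fun k l ↦ f (t k l)) i j := by
  cases i using Fin.cases <;> cases j using Fin.cases <;>
    simp only [cyclicExtension_zero_zero, cyclicExtension_zero_succ, cyclicExtension_succ_zero,
      cyclicExtension_succ_succ, map_neg, map_sum]

theorem sum_cyclicExtension (j : Fin (n + 1)) : ∑ i, cyclicExtension t i j = 0 := by
  rw [Fin.sum_univ_succ]
  cases j using Fin.cases with
  | zero =>
    simp only [cyclicExtension_zero_zero, cyclicExtension_succ_zero, Finset.sum_neg_distrib]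
    rw [Finset.sum_comm, add_neg_cancel]
  | succ j => simp only [cyclicExtension_zero_succ, cyclicExtension_succ_succ, neg_add_cancel]

end Apply

theorem cyclicExtension_symm {t : Fin n → Fin n → A} (ht : ∀ i j, t i j = t j i)
    (i j : Fin (n + 1)) : cyclicExtension t i j = cyclicExtension t j i := by
  cases i using Fin.cases <;> cases j using Fin.cases
  case succ.succ i j => exact ht i j
  all_goals rfl

theorem cyclicExtension_succ_of_sum_eq_zero {t : Fin (n + 1) → Fin (n + 1) → A}
    (symm : ∀ i j, t i j = t j i) (sum_eq_zero : ∀ j, ∑ i, t i j = 0) :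
    cyclicExtension (fun i j : Fin n ↦ t i.succ j.succ) = t := by
  have zero_left (j : Fin (n + 1)) : t 0 j = -∑ i : Fin n, t i.succ j :=
    eq_neg_of_add_eq_zero_left ((Fin.sum_univ_succ _).symm.trans (sum_eq_zero j))
  ext i j
  cases i using Fin.cases <;> cases j using Fin.cases
  case zero.zero =>
    rw [cyclicExtension_zero_zero, zero_left, Finset.sum_comm, ← Finset.sum_neg_distrib]
    exact Finset.sum_congr rfl fun j _ ↦ by rw [symm j.succ 0, zero_left, neg_neg]
  case zero.succ j => exact (zero_left j.succ).symm
  case succ.zero j => exact (zero_left j.succ).symm.trans (symm 0 j.succ)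
  case succ.succ => rfl

namespace IsFramedDrinfeldKohno

variable [IsAddTorsionFree L] {t : Fin n → Fin n → L}

theorem lie_cyclicExtension_zero (ht : IsFramedDrinfeldKohno t) {i j k : Fin (n + 1)}
    (hi : i ≠ 0) (hj : j ≠ 0) (hik : i ≠ k) (hjk : j ≠ k) :
    ⁅cyclicExtension t i j, cyclicExtension t 0 k⁆ = 0 := by
  obtain ⟨i, rfl⟩ := Fin.exists_succ_eq.2 hi
  obtain ⟨j, rfl⟩ := Fin.exists_succ_eq.2 hj
  cases k using Fin.cases with
  | zero =>
    rw [cyclicExtension_succ_succ, cyclicExtension_zero_zero, Finset.sum_comm]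
    exact ht.lie_sum_sum_eq_zero i j
  | succ k =>
    rw [cyclicExtension_succ_succ, cyclicExtension_zero_succ, lie_neg, neg_eq_zero]
    exact ht.lie_sum_eq_zero (mt (congrArg Fin.succ) hik) (mt (congrArg Fin.succ) hjk)

theorem lie_cyclicExtension (ht : IsFramedDrinfeldKohno t) {i j k l : Fin (n + 1)}
    (hik : i ≠ k) (hil : i ≠ l) (hjk : j ≠ k) (hjl : j ≠ l) :
    ⁅cyclicExtension t i j, cyclicExtension t k l⁆ = 0 := by
  rcases eq_or_ne k 0 with rfl | hk
  · exact ht.lie_cyclicExtension_zero hik hjk hil hjl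
  rcases eq_or_ne l 0 with rfl | hl
  · rw [cyclicExtension_symm ht.symm k]
    exact ht.lie_cyclicExtension_zero hil hjl hik hjk
  rcases eq_or_ne i 0 with rfl | hi
  · rw [← lie_skew, neg_eq_zero]
    exact ht.lie_cyclicExtension_zero hk hl hjk.symm hjl.symm
  rcases eq_or_ne j 0 with rfl | hj
  · rw [← lie_skew, neg_eq_zero, cyclicExtension_symm ht.symm i]
    exact ht.lie_cyclicExtension_zero hk hl hik.symm hil.symm
  obtain ⟨i, rfl⟩ := Fin.exists_succ_eq.2 hi
  obtain ⟨j, rfl⟩ := Fin.exists_succ_eq.2 hj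
  obtain ⟨k, rfl⟩ := Fin.exists_succ_eq.2 hk
  obtain ⟨l, rfl⟩ := Fin.exists_succ_eq.2 hl
  simp only [ne_eq, Fin.succ_inj] at hik hil hjk hjl
  exact ht.lie_eq_zero hik hil hjk hjl

theorem isCyclicDrinfeldKohno_cyclicExtension (ht : IsFramedDrinfeldKohno t) :
    IsCyclicDrinfeldKohno (cyclicExtension t) where
  symm := cyclicExtension_symm ht.symm
  lie_eq_zero := ht.lie_cyclicExtension
  sum_eq_zero := sum_cyclicExtension t

end IsFramedDrinfeldKohno

end CyclicExtension

section UniversalProperty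

theorem pair_inter_pair_eq_empty_iff {α : Type*} {i j k l : α} :
    ({i, j} ∩ {k, l} : Set α) = ∅ ↔ i ≠ k ∧ i ≠ l ∧ j ≠ k ∧ j ≠ l := by
  simp only [← Set.disjoint_iff_inter_eq_empty, Set.disjoint_insert_left,
    Set.disjoint_singleton_left, Set.mem_insert_iff, Set.mem_singleton_iff, not_or, and_assoc,
    ne_eq]

variable {r : ℕ} {L : Type*} [LieRing L] [LieAlgebra ℚ L]

theorem isFramedDrinfeldKohno_tf : IsFramedDrinfeldKohno (tf (r := r)) where
  symm i j := sub_eq_zero.1 <|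
    lieQuotientMk_lieSpan_eq_zero (S := ftRel r) (.inl ⟨i, j, rfl⟩)
  lie_eq_zero {i j k l} hik hil hjk hjl :=
    lieQuotientMk_lieSpan_eq_zero (S := ftRel r) <|
      .inr <| .inl ⟨i, j, k, l, pair_inter_pair_eq_empty_iff.2 ⟨hik, hil, hjk, hjl⟩, rfl⟩
  lie_add_eq_zero i j k :=
    lieQuotientMk_lieSpan_eq_zero (S := ftRel r) (.inr <| .inr ⟨i, j, k, rfl⟩)

theorem isCyclicDrinfeldKohno_tc : IsCyclicDrinfeldKohno (tc (r := r)) where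
  symm i j := sub_eq_zero.1 <|
    lieQuotientMk_lieSpan_eq_zero (S := ftcRel r) (.inl ⟨i, j, rfl⟩)
  lie_eq_zero {i j k l} hik hil hjk hjl :=
    lieQuotientMk_lieSpan_eq_zero (S := ftcRel r) <|
      .inr <| .inl ⟨i, j, k, l, pair_inter_pair_eq_empty_iff.2 ⟨hik, hil, hjk, hjl⟩, rfl⟩
  sum_eq_zero j :=
    (map_sum (lieQuotientMk _) (fun i ↦ of ℚ (i, j)) Finset.univ).symm.trans <|
      lieQuotientMk_lieSpan_eq_zero (S := ftcRel r) (.inr <| .inr ⟨j, rfl⟩)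

theorem IsFramedDrinfeldKohno.lift_eq_zero {t : Fin r → Fin r → L} (ht : IsFramedDrinfeldKohno t) :
    ∀ x ∈ ftRel r, lift ℚ (fun p : Fin r × Fin r ↦ t p.1 p.2) x = 0 := by
  rintro _ (⟨i, j, rfl⟩ | ⟨i, j, k, l, hdisj, rfl⟩ | ⟨i, j, k, rfl⟩)
  · simpa only [map_sub, lift_of_apply, sub_eq_zero] using ht.symm i j
  · obtain ⟨hik, hil, hjk, hjl⟩ := pair_inter_pair_eq_empty_iff.1 hdisj
    simpa only [LieHom.map_lie, lift_of_apply] using ht.lie_eq_zero hik hil hjk hjl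
  · simpa only [LieHom.map_lie, map_add, lift_of_apply] using ht.lie_add_eq_zero i j k

theorem IsCyclicDrinfeldKohno.lift_eq_zero {t : Fin (r + 1) → Fin (r + 1) → L}
    (ht : IsCyclicDrinfeldKohno t) :
    ∀ x ∈ ftcRel r, lift ℚ (fun p : Fin (r + 1) × Fin (r + 1) ↦ t p.1 p.2) x = 0 := by
  rintro _ (⟨i, j, rfl⟩ | ⟨i, j, k, l, hdisj, rfl⟩ | ⟨j, rfl⟩)
  · simpa only [map_sub, lift_of_apply, sub_eq_zero] using ht.symm i j
  · obtain ⟨hik, hil, hjk, hjl⟩ := pair_inter_pair_eq_empty_iff.1 hdisj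
    simpa only [LieHom.map_lie, lift_of_apply] using ht.lie_eq_zero hik hil hjk hjl
  · simpa only [map_sum, lift_of_apply] using ht.sum_eq_zero j

/-- The morphism out of `ft r` classifying a family that satisfies its relations. -/
noncomputable def ftLift {t : Fin r → Fin r → L} (ht : IsFramedDrinfeldKohno t) : ft r →ₗ⁅ℚ⁆ L :=
  lieSpanQuotientLift _ ht.lift_eq_zero

/-- The morphism out of `ftc r` classifying a family that satisfies its relations. -/
noncomputable def ftcLift {t : Fin (r + 1) → Fin (r + 1) → L} (ht : IsCyclicDrinfeldKohno t) :
    ftc r →ₗ⁅ℚ⁆ L :=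
  lieSpanQuotientLift _ ht.lift_eq_zero

theorem ftLift_tf {t : Fin r → Fin r → L} (ht : IsFramedDrinfeldKohno t) (i j : Fin r) :
    ftLift ht (tf i j) = t i j :=
  (lieSpanQuotientLift_mk _ ht.lift_eq_zero _).trans (lift_of_apply ..)

theorem ftcLift_tc {t : Fin (r + 1) → Fin (r + 1) → L} (ht : IsCyclicDrinfeldKohno t)
    (i j : Fin (r + 1)) : ftcLift ht (tc i j) = t i j :=
  (lieSpanQuotientLift_mk _ ht.lift_eq_zero _).trans (lift_of_apply ..)

theorem ft_hom_ext {f g : ft r →ₗ⁅ℚ⁆ L} (h : ∀ i j, f (tf i j) = g (tf i j)) : f = g :=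
  lieQuotient_hom_ext <| hom_ext fun p ↦ h p.1 p.2

theorem ftc_hom_ext {f g : ftc r →ₗ⁅ℚ⁆ L} (h : ∀ i j, f (tc i j) = g (tc i j)) : f = g :=
  lieQuotient_hom_ext <| hom_ext fun p ↦ h p.1 p.2

end UniversalProperty

section Isomorphism

variable (r : ℕ)

theorem isCyclicDrinfeldKohno_cyclicExtension_tf :
    IsCyclicDrinfeldKohno (cyclicExtension (tf (r := r))) :=
  have : IsAddTorsionFree (ft r) := .of_module_rat _
  isFramedDrinfeldKohno_tf.isCyclicDrinfeldKohno_cyclicExtension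

theorem isFramedDrinfeldKohno_tc_succ :
    IsFramedDrinfeldKohno fun i j : Fin r ↦ tc i.succ j.succ :=
  isCyclicDrinfeldKohno_tc.isFramedDrinfeldKohno.comp_injective (Fin.succ_injective r)

/-- The morphism `Φ : ft'(r) → ft(r)`. -/
noncomputable def ftcToFt : ftc r →ₗ⁅ℚ⁆ ft r :=
  ftcLift (isCyclicDrinfeldKohno_cyclicExtension_tf r)

/-- The inverse of `Φ`, which includes the generators of `ft(r)` as those of `ft'(r)` with nonzero
indices. -/
noncomputable def ftToFtc : ft r →ₗ⁅ℚ⁆ ftc r :=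
  ftLift (isFramedDrinfeldKohno_tc_succ r)

theorem ftcToFt_tc (i j : Fin (r + 1)) : ftcToFt r (tc i j) = cyclicExtension tf i j :=
  ftcLift_tc _ i j

theorem ftToFtc_tf (i j : Fin r) : ftToFtc r (tf i j) = tc i.succ j.succ :=
  ftLift_tf _ i j

theorem ftcToFt_comp_ftToFtc : (ftcToFt r).comp (ftToFtc r) = LieHom.id :=
  ft_hom_ext fun i j ↦ by
    rw [LieHom.comp_apply, ftToFtc_tf, ftcToFt_tc, cyclicExtension_succ_succ, LieHom.id_apply]

theorem ftToFtc_comp_ftcToFt : (ftToFtc r).comp (ftcToFt r) = LieHom.id :=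
  ftc_hom_ext fun i j ↦
    calc ftToFtc r (ftcToFt r (tc i j))
        = ftToFtc r (cyclicExtension tf i j) := by rw [ftcToFt_tc]
      _ = cyclicExtension (fun k l ↦ ftToFtc r (tf k l)) i j :=
          map_cyclicExtension tf (ftToFtc r : ft r →+ ftc r) i j
      _ = cyclicExtension (fun k l ↦ tc k.succ l.succ) i j := by simp only [ftToFtc_tf]
      _ = tc i j := by
          rw [cyclicExtension_succ_of_sum_eq_zero isCyclicDrinfeldKohno_tc.symm
            isCyclicDrinfeldKohno_tc.sum_eq_zero]

/-- The isomorphism `Φ : ft'(r) ≃ ft(r)`. -/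
noncomputable def ftcEquivFt : ftc r ≃ₗ⁅ℚ⁆ ft r where
  toLieHom := ftcToFt r
  invFun := ftToFtc r
  left_inv := LieHom.congr_fun (ftToFtc_comp_ftcToFt r)
  right_inv := LieHom.congr_fun (ftcToFt_comp_ftToFtc r)

theorem ftcEquivFt_tc (i j : Fin (r + 1)) : ftcEquivFt r (tc i j) = cyclicExtension tf i j :=
  ftcToFt_tc r i j

end Isomorphism

/-- For `r ≥ 1` there is a Lie algebra isomorphism `Φ : ft'(r) → ft(r)`
determined on generators by `Φ(t_{ij}) = t_{ij}` for `1 ≤ i,j ≤ r`,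
`Φ(t_{0j}) = Φ(t_{j0}) = −∑_{i=1}^r t_{ij}` for `1 ≤ j ≤ r`, and
`Φ(t_{00}) = ∑_{i,j=1}^r t_{ij}`.  In particular the two presentations define isomorphic
Lie algebras. -/
theorem ftc_equiv_ft (r : ℕ) (hr : 1 ≤ r) :
    ∃ Φ : ftc r ≃ₗ⁅ℚ⁆ ft r,
      (∀ i j : Fin r, Φ (tc i.succ j.succ) = tf i j) ∧
      (∀ j : Fin r, Φ (tc 0 j.succ) = -∑ i : Fin r, tf i j) ∧
      (∀ j : Fin r, Φ (tc j.succ 0) = -∑ i : Fin r, tf i j) ∧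
      Φ (tc 0 0) = ∑ i : Fin r, ∑ j : Fin r, tf i j := by
  refine ⟨ftcEquivFt r, fun i j ↦ ?_, fun j ↦ ?_, fun j ↦ ?_, ?_⟩
  · rw [ftcEquivFt_tc, cyclicExtension_succ_succ]
  · rw [ftcEquivFt_tc, cyclicExtension_zero_succ]
  · rw [ftcEquivFt_tc, cyclicExtension_succ_zero]
  · rw [ftcEquivFt_tc, cyclicExtension_zero_zero]
end

section
/- Let r ≥ 1. For all i, j, k ∈ {0,…,r}, the relation [t_{ij}, t_{ki} + t_{kj}] = 0 holds in ft'(r). (In particular the defining relations of the presentation of ft(r) with indices 1,…,r are consequences of the cyclic presentation.) -/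
open FreeLieAlgebra

/-- A family `t` of elements of a Lie ring, indexed by pairs from a finite set, satisfying the
relations of the cyclic presentation of the framed Drinfeld–Kohno Lie algebra; for indices
`{0,…,r}` over `ℚ`, such families are the Lie algebra maps out of `ft'(r)`. -/
structure IsCyclicFramedDKFamily {ι L : Type*} [Fintype ι] [LieRing L] (t : ι → ι → L) :
    Prop where
  symm (i j : ι) : t i j = t j i
  lie_eq_zero_of_disjoint {i j k l : ι} :
    Disjoint ({i, j} : Set ι) {k, l} → ⁅t i j, t k l⁆ = 0
  sum_eq_zero (j : ι) : ∑ i, t i j = 0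

namespace IsCyclicFramedDKFamily

variable {ι L : Type*} [Fintype ι] [LieRing L] {t : ι → ι → L}

-- Bracket `t i j` with the relation `∑ l, t l k = 0`: only the terms `l = i` and `l = j` survive.
theorem sum_pair_lie_eq_zero [DecidableEq ι] (ht : IsCyclicFramedDKFamily t) {i j k : ι}
    (hki : k ≠ i) (hkj : k ≠ j) : ∑ l ∈ {i, j}, ⁅t i j, t l k⁆ = 0 := by
  have lie_eq_zero_of_notMem (l : ι) (hl : l ∉ ({i, j} : Finset ι)) : ⁅t i j, t l k⁆ = 0 :=
    ht.lie_eq_zero_of_disjoint (by simp_all [eq_comm])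
  calc ∑ l ∈ {i, j}, ⁅t i j, t l k⁆
      = ∑ l, ⁅t i j, t l k⁆ :=
        Finset.sum_subset (Finset.subset_univ _) fun l _ ↦ lie_eq_zero_of_notMem l
    _ = ⁅t i j, ∑ l, t l k⁆ := (lie_sum ..).symm
    _ = 0 := by rw [ht.sum_eq_zero, lie_zero]

theorem lie_diag_eq_zero (ht : IsCyclicFramedDKFamily t) (i k : ι) : ⁅t i i, t i k⁆ = 0 := by
  classical
  obtain rfl | hki := eq_or_ne k i
  · exact lie_self _
  · simpa using ht.sum_pair_lie_eq_zero hki hki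

theorem lie_self_add_eq_zero (ht : IsCyclicFramedDKFamily t) (i j : ι) :
    ⁅t i j, t i i + t i j⁆ = 0 := by
  rw [lie_add, lie_self, add_zero, ← lie_skew, ht.lie_diag_eq_zero, neg_zero]

end IsCyclicFramedDKFamily

theorem ftc_hexagon_relation_general {ι L : Type*} [Fintype ι] [LieRing L] {t : ι → ι → L}
    (ht : IsCyclicFramedDKFamily t) (i j k : ι) : ⁅t i j, t k i + t k j⁆ = 0 := by
  classical
  obtain rfl | hki := eq_or_ne k i
  · exact ht.lie_self_add_eq_zero k j
  obtain rfl | hkj := eq_or_ne k j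
  · rw [ht.symm i k, add_comm]
    exact ht.lie_self_add_eq_zero k i
  obtain rfl | hij := eq_or_ne i j
  · rw [lie_add, ht.symm k i, ht.lie_diag_eq_zero, add_zero]
  · rw [lie_add, ht.symm k i, ht.symm k j]
    exact (Finset.sum_pair hij).symm.trans (ht.sum_pair_lie_eq_zero hki hkj)

theorem mk_eq_zero_of_mem_ftcRel {r : ℕ} {x : FreeLieAlgebra ℚ (Fin (r + 1) × Fin (r + 1))}
    (hx : x ∈ ftcRel r) : (LieSubmodule.Quotient.mk x : ftc r) = 0 :=
  (LieSubmodule.Quotient.mk_eq_zero _).2 (LieSubmodule.subset_lieSpan hx)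

theorem isCyclicFramedDKFamily_tc (r : ℕ) :
    IsCyclicFramedDKFamily (tc : Fin (r + 1) → Fin (r + 1) → ftc r) where
  symm i j := sub_eq_zero.1 (mk_eq_zero_of_mem_ftcRel (Or.inl ⟨i, j, rfl⟩))
  lie_eq_zero_of_disjoint {i j k l} h :=
    mk_eq_zero_of_mem_ftcRel (Or.inr (Or.inl ⟨i, j, k, l, h.inter_eq, rfl⟩))
  sum_eq_zero j :=
    (map_sum (LieSubmodule.Quotient.mk' (LieSubmodule.lieSpan ℚ _ (ftcRel r))) _ _).symm.trans
      (mk_eq_zero_of_mem_ftcRel (Or.inr (Or.inr ⟨j, rfl⟩)))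

/-- For `r ≥ 1` and all `i, j, k ∈ {0,…,r}` the relation
`[t_{ij}, t_{ki} + t_{kj}] = 0` holds in `ft'(r)`. -/
theorem ftc_hexagon_relation (r : ℕ) (hr : 1 ≤ r) (i j k : Fin (r + 1)) :
    ⁅tc i j, tc k i + tc k j⁆ = 0 :=
  ftc_hexagon_relation_general (isCyclicFramedDKFamily_tc r) i j k
end
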